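/- For every string w, the string JHC(w) contains no run of four consecutive equal entries; that is, there is no index i with 0 ≤ i and i + 3 < length(JHC(w)) such that the entries of JHC(w) at positions i, i+1, i+2, i+3 are all equal. -/

import Mathlib

/-!
Of any four consecutive entries of `JHC w`, two at distance two are run letters `a_j`, `a_{j+1}`
of adjacent runs. Maximality of runs forces `a_j ≠ a_{j+1}` (`isChain_headI_splitBy`), so the four
entries cannot all be equal (`no_four_flatMap`).
-/

open Filter

/-- Conway's audioactive (look-and-say) operator: split into maximal runs
`a₁^{m₁} ⋯ a_r^{m_r}` and output `[m₁, a₁, …, m_r, a_r]`. -/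
def JHC (w : List ℕ) : List ℕ :=
  (w.splitBy (· == ·)).flatMap (fun r => [r.length, r.headI])

/-- A string is a nonempty finite list of positive integers. -/
def IsString (w : List ℕ) : Prop := w ≠ [] ∧ ∀ x ∈ w, 0 < x

/-- `w` splits as `L.R`. -/
def SplitsAs (w L R : List ℕ) : Prop :=
  w = L ++ R ∧ L ≠ [] ∧ R ≠ [] ∧ ∀ n : ℕ, JHC^[n] w = JHC^[n] L ++ JHC^[n] R

/-- An atom is a string admitting no splitting. -/
def IsAtomString (w : List ℕ) : Prop := IsString w ∧ ∀ L R, ¬ SplitsAs w L R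

/-- `w` is a split compound of the atoms in the list `As`. -/
def SplitCompound (w : List ℕ) (As : List (List ℕ)) : Prop :=
  (∀ A ∈ As, IsAtomString A) ∧ w = As.flatten ∧
    ∀ n : ℕ, JHC^[n] w = (As.map (fun A => JHC^[n] A)).flatten

/-- Adjacent maximal runs have different letters: `List.splitBy` separates the last entry of a run
from the first entry of the next one, and a run is constant. -/
theorem isChain_headI_splitBy (w : List ℕ) :
    (w.splitBy (· == ·)).IsChain (fun a b => a.headI ≠ b.headI) := by
  refine (List.isChain_getLast_head_splitBy (· == ·) w).imp_of_mem_imp ?_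
  rintro a b hma - ⟨ha, hb, hab⟩ heq
  have hc : a.IsChain (· = ·) := by
    simpa using List.isChain_of_mem_splitBy hma
  obtain ⟨x, t, rfl⟩ := List.exists_cons_of_ne_nil ha
  obtain ⟨y, s, rfl⟩ := List.exists_cons_of_ne_nil hb
  have hx : (x :: t).getLast ha = x := by
    have hrep := List.isChain_eq_iff_eq_replicate.1 hc x (by simp)
    exact List.eq_of_mem_replicate (hrep ▸ List.getLast_mem ha :
      (x :: t).getLast ha ∈ List.replicate (x :: t).length x)
  simp only [hx, List.head_cons] at hab
  simp only [List.headI_cons] at heq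
  simp [heq] at hab

/-- The same conclusion for any list of blocks with distinct adjacent heads; the induction strips
one block, which shifts positions by two. -/
theorem no_four_flatMap (L : List (List ℕ))
    (hL : L.IsChain (fun a b => a.headI ≠ b.headI)) (i : ℕ)
    (M : List ℕ) (hM : M = L.flatMap (fun r => [r.length, r.headI]))
    (hi : i + 3 < M.length)
    (h01 : M.getD i 0 = M.getD (i + 1) 0)
    (h12 : M.getD (i + 1) 0 = M.getD (i + 2) 0)
    (h23 : M.getD (i + 2) 0 = M.getD (i + 3) 0) : False := by
  induction L generalizing i M with
  | nil => simp [hM] at hi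
  | cons a L ih =>
    subst hM
    match i with
    | j + 2 =>
      exact ih hL.tail j _ rfl (by simp at hi ⊢; omega)
        (by simpa using h01) (by simpa using h12) (by simpa using h23)
    | 0 | 1 =>
      -- Positions 1 and 3 hold the letters of the first two blocks.
      cases L with
      | nil => simp at hi
      | cons b L =>
        have hab := (List.isChain_cons_cons.1 hL).1
        simp_all

/-- `JHC w` contains no run of four consecutive equal entries. -/
theorem no_four_in_a_row :
    ∀ w : List ℕ, IsString w →
      ¬ ∃ i : ℕ, i + 3 < (JHC w).length ∧
        (JHC w).getD i 0 = (JHC w).getD (i + 1) 0 ∧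
        (JHC w).getD (i + 1) 0 = (JHC w).getD (i + 2) 0 ∧
        (JHC w).getD (i + 2) 0 = (JHC w).getD (i + 3) 0 := by
  rintro w - ⟨i, hi, h01, h12, h23⟩
  exact no_four_flatMap _ (isChain_headI_splitBy w) i (JHC w) rfl hi h01 h12 h23
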